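/- For n >= 1, the number of ascent sequences of length n avoiding the three patterns 0101, 0120, and 0121 equals 2^n - n. -/

import Mathlib

/-- Number of ascents of a sequence (list) of natural numbers. -/
def asc (l : List ℕ) : ℕ :=
  ((List.range (l.length - 1)).filter (fun j => l.getD j 0 < l.getD (j + 1) 0)).length

/-- `x` is an ascent sequence: nonempty, starts with 0, and each later entry is
at most one more than the number of ascents of the preceding prefix. -/
def IsAscSeq (x : List ℕ) : Prop :=
  x ≠ [] ∧ x.getD 0 0 = 0 ∧
    ∀ i, 1 ≤ i → i < x.length → x.getD i 0 ≤ 1 + asc (x.take i)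

/-- `x` contains the pattern `p`: some subsequence of `x` is order-isomorphic
(including equalities) to `p`, i.e. its reduction equals `p`. -/
def Contains (p x : List ℕ) : Prop :=
  ∃ y : List ℕ, y.Sublist x ∧ y.length = p.length ∧
    ∀ i j, i < p.length → j < p.length →
      (y.getD i 0 < y.getD j 0 ↔ p.getD i 0 < p.getD j 0)

/-- `x` avoids the pattern `p`. -/
def Avoids (p x : List ℕ) : Prop := ¬ Contains p x


/-!
Cut the positions `0, …, n` into consecutive blocks and give the successive blocks the values
`0, 1, 2, 3, …`, or the values `0, 1, 0, 2, 3, …`. These are exactly the sequences to be counted.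
Indeed, in such a sequence the maximum `M` equals the number of ascents, so the next entry is at
most `M + 1`; and if `M ≥ 2`, it is not below `M`, because `0` would create `0120` and `0 < v < M`
would create `0121`. Hence the only possible descent is from `1` to `0`, after which avoiding
`0101` forbids another `1`. Each of the two families has one member for every subset of the `n`
possible cuts, and they share precisely the members with fewer than two cuts, which leaves
`2 ^ n + (2 ^ n - (n + 1))` sequences of length `n + 1`.
-/

open Finset
open scoped List

section Patterns

variable {p x y : List ℕ}

theorem contains_iff_exists_strictMonoOn :
    Contains p x ↔ ∃ f : ℕ → ℕ, StrictMonoOn f {v | v ∈ p} ∧ p.map f <+ x := by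
  constructor
  · rintro ⟨y, hyx, hlen, horder⟩
    have order_getElem (i j) (hi : i < p.length) (hj : j < p.length) :
        y[i] < y[j] ↔ p[i] < p[j] := by
      simpa [List.getD_eq_getElem, hlen, hi, hj] using horder i j hi hj
    refine ⟨fun v => y.getD (p.idxOf v) 0, fun v hv w hw hvw => ?_, ?_⟩
    · have hv := List.idxOf_lt_length_of_mem hv
      have hw := List.idxOf_lt_length_of_mem hw
      simpa [List.getD_eq_getElem, hlen, hv, hw, order_getElem] using hvw
    · convert hyx
      refine List.ext_getElem (by simp [hlen]) fun i hi hi' => ?_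
      have hip : i < p.length := by simpa using hi
      have hidx := List.idxOf_lt_length_of_mem (List.getElem_mem hip)
      have h₁ := order_getElem i _ hip hidx
      have h₂ := order_getElem _ i hidx hip
      simp only [List.getElem_idxOf, lt_irrefl, iff_false, not_lt] at h₁ h₂
      simpa [List.getD_eq_getElem, hlen, hidx] using le_antisymm h₁ h₂
  · rintro ⟨f, hf, hsub⟩
    refine ⟨p.map f, hsub, by simp, fun i j hi hj => ?_⟩
    simpa [List.getD_eq_getElem, hi, hj] using
      hf.lt_iff_lt (List.getElem_mem hi) (List.getElem_mem hj)

theorem Avoids.of_sublist (h : Avoids p x) (hyx : y <+ x) : Avoids p y :=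
  fun ⟨z, hzy, hz⟩ => h ⟨z, hzy.trans hyx, hz⟩

theorem avoids_0101_iff : Avoids [0, 1, 0, 1] x ↔ ∀ a b, a < b → ¬ [a, b, a, b] <+ x := by
  rw [Avoids, contains_iff_exists_strictMonoOn]
  refine ⟨fun h a b hab hx => h ⟨([a, b].getD · 0), by simp [StrictMonoOn, hab], hx⟩, ?_⟩
  rintro h ⟨f, hf, hx⟩
  exact h _ _ (hf (by simp) (by simp) zero_lt_one) hx

theorem avoids_0120_iff :
    Avoids [0, 1, 2, 0] x ↔ ∀ a b c, a < b → b < c → ¬ [a, b, c, a] <+ x := by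
  rw [Avoids, contains_iff_exists_strictMonoOn]
  refine ⟨fun h a b c hab hbc hx =>
    h ⟨([a, b, c].getD · 0), by simp [StrictMonoOn, hab, hbc, hab.trans hbc], hx⟩, ?_⟩
  rintro h ⟨f, hf, hx⟩
  exact h _ _ _ (hf (by simp) (by simp) zero_lt_one) (hf (by simp) (by simp) one_lt_two) hx

theorem avoids_0121_iff :
    Avoids [0, 1, 2, 1] x ↔ ∀ a b c, a < b → b < c → ¬ [a, b, c, b] <+ x := by
  rw [Avoids, contains_iff_exists_strictMonoOn]
  refine ⟨fun h a b c hab hbc hx =>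
    h ⟨([a, b, c].getD · 0), by simp [StrictMonoOn, hab, hbc, hab.trans hbc], hx⟩, ?_⟩
  rintro h ⟨f, hf, hx⟩
  exact h _ _ _ (hf (by simp) (by simp) zero_lt_one) (hf (by simp) (by simp) one_lt_two) hx

end Patterns

section AscentSequences

theorem asc_eq_count (l : List ℕ) :
    asc l = Nat.count (fun j => l.getD j 0 < l.getD (j + 1) 0) (l.length - 1) := by
  rw [asc, Nat.count, List.countP_eq_length_filter]

theorem IsAscSeq.of_append_singleton {l : List ℕ} {v : ℕ} (hl : l ≠ [])
    (h : IsAscSeq (l ++ [v])) : IsAscSeq l ∧ v ≤ 1 + asc l := by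
  have hlen : 0 < l.length := List.length_pos_iff.2 hl
  obtain ⟨-, hzero, hstep⟩ := h
  rw [List.getD_append _ _ _ _ hlen] at hzero
  refine ⟨⟨hl, hzero, fun i hi hil => ?_⟩, ?_⟩
  · have hi' := hstep i hi (by simp; omega)
    rwa [List.getD_append _ _ _ _ hil, List.take_append_of_le_length hil.le] at hi'
  · simpa using hstep l.length hlen (by simp)

/-- The sequences counted by the theorem. -/
def IsAvoidingAscSeq (x : List ℕ) : Prop :=
  IsAscSeq x ∧ Avoids [0, 1, 0, 1] x ∧ Avoids [0, 1, 2, 0] x ∧ Avoids [0, 1, 2, 1] x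

theorem IsAvoidingAscSeq.of_append_singleton {l : List ℕ} {v : ℕ} (hl : l ≠ [])
    (h : IsAvoidingAscSeq (l ++ [v])) : IsAvoidingAscSeq l ∧ v ≤ 1 + asc l := by
  obtain ⟨hasc, h0101, h0120, h0121⟩ := h
  have hsub : l <+ l ++ [v] := List.sublist_append_left l [v]
  obtain ⟨hl_asc, hv⟩ := hasc.of_append_singleton hl
  exact ⟨⟨hl_asc, h0101.of_sublist hsub, h0120.of_sublist hsub, h0121.of_sublist hsub⟩, hv⟩

theorem IsAvoidingAscSeq.le_of_append_singleton {l : List ℕ} {v M : ℕ}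
    (h : IsAvoidingAscSeq (l ++ [v])) (hM : 2 ≤ M)
    (hl : ∀ u, 0 < u → u < M → [0, u, M] <+ l) : M ≤ v := by
  obtain ⟨-, -, h0120, h0121⟩ := h
  by_contra! hvM
  rcases Nat.eq_zero_or_pos v with rfl | hv
  · exact avoids_0120_iff.1 h0120 0 1 M one_pos hM
      ((hl 1 one_pos hM).append (List.Sublist.refl [0]))
  · exact avoids_0121_iff.1 h0121 0 v M hv hvM ((hl v hv hvM).append (List.Sublist.refl [v]))

end AscentSequences

section BlockSequences

/-- The sequence of length `n + 1` that is constant on the blocks into which the positions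
`0, …, n` are cut right after each position in `S`, with value `f k` on the `k`-th block
(counting from `0`). -/
def blockSeq (f : ℕ → ℕ) (S : Finset ℕ) (n : ℕ) : List ℕ :=
  (List.range (n + 1)).map fun i => f (Nat.count (· ∈ S) i)

variable {f g : ℕ → ℕ} {S : Finset ℕ} {n : ℕ}

@[simp]
theorem length_blockSeq : (blockSeq f S n).length = n + 1 := by
  simp [blockSeq]

theorem blockSeq_ne_nil : blockSeq f S n ≠ [] :=
  List.ne_nil_of_length_pos (by simp)

theorem blockSeq_succ :
    blockSeq f S (n + 1) = blockSeq f S n ++ [f (Nat.count (· ∈ S) (n + 1))] := by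
  simp [blockSeq, List.range_succ]

theorem getD_blockSeq {i : ℕ} (hi : i ≤ n) :
    (blockSeq f S n).getD i 0 = f (Nat.count (· ∈ S) i) := by
  simp [blockSeq, Nat.lt_succ_of_le hi]

theorem take_blockSeq {i : ℕ} (hi : i ≤ n) : (blockSeq f S n).take (i + 1) = blockSeq f S i := by
  simp [blockSeq, ← List.map_take, List.take_range, hi]

theorem count_mem_eq_card (hS : S ⊆ range n) : Nat.count (· ∈ S) n = #S := by
  rw [Nat.count_eq_card_filter_range, filter_mem_eq_inter, inter_eq_right.2 hS]

theorem blockSeq_congr (hS : S ⊆ range n) (hfg : ∀ k ≤ #S, f k = g k) :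
    blockSeq f S n = blockSeq g S n := by
  refine List.map_congr_left fun i hi => hfg _ ?_
  rw [← count_mem_eq_card hS]
  exact Nat.count_monotone _ (Nat.le_of_lt_succ (List.mem_range.1 hi))

theorem blockSeq_append_same (hS : S ⊆ range n) :
    blockSeq f S n ++ [f #S] = blockSeq f S (n + 1) := by
  rw [blockSeq_succ, count_mem_eq_card (hS.trans (range_subset_range.2 n.le_succ))]

theorem insert_subset_range_succ (hS : S ⊆ range n) : insert n S ⊆ range (n + 1) := by
  rw [range_add_one]
  exact insert_subset_insert n hS

theorem blockSeq_append_next (hS : S ⊆ range n) :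
    blockSeq f S n ++ [f (#S + 1)] = blockSeq f (insert n S) (n + 1) := by
  have hn : n ∉ S := fun h => notMem_range_self (hS h)
  have hcount (i) (hi : i ≤ n) : Nat.count (· ∈ S) i = Nat.count (· ∈ insert n S) i := by
    simp only [Nat.count_eq_card_filter_range]
    exact congrArg card (filter_congr fun j hj => by grind)
  rw [blockSeq_succ, count_mem_eq_card (insert_subset_range_succ hS), card_insert_of_notMem hn]
  congr 1
  refine List.map_congr_left fun i hi => ?_
  rw [hcount i (Nat.le_of_lt_succ (List.mem_range.1 hi))]

theorem injOn_blockSeq (hf : ∀ k, f k ≠ f (k + 1)) (n : ℕ) :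
    Set.InjOn (fun S => blockSeq f S n) (range n).powerset := by
  intro S hS T hT hST
  have hvalue (i) (hi : i ≤ n) : f (Nat.count (· ∈ S) i) = f (Nat.count (· ∈ T) i) := by
    simpa only [getD_blockSeq hi] using congrArg (·.getD i 0) hST
  have hmem (i) (hi : i < n) (hcount : Nat.count (· ∈ S) i = Nat.count (· ∈ T) i) :
      i ∈ S ↔ i ∈ T := by
    have := hvalue (i + 1) hi
    have := hf (Nat.count (· ∈ T) i)
    grind
  have hcount (i) (hi : i ≤ n) : Nat.count (· ∈ S) i = Nat.count (· ∈ T) i := by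
    induction i with
    | zero => simp
    | succ i ih => simp only [Nat.count_succ, ih (by omega), hmem i hi (ih (by omega))]
  ext i
  by_cases hi : i < n
  · exact hmem i hi (hcount i hi.le)
  · simp only [coe_powerset, Set.mem_preimage, Set.mem_powerset_iff, coe_subset] at hS hT
    grind

theorem exists_pairwise_le_of_sublist_blockSeq {y : List ℕ} (h : y <+ blockSeq f S n) :
    ∃ ks : List ℕ, ks.Pairwise (· ≤ ·) ∧ y = ks.map f := by
  obtain ⟨is, his, rfl⟩ := List.sublist_map_iff.1 h
  refine ⟨is.map (Nat.count (· ∈ S)), ?_, by simp⟩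
  exact (List.pairwise_lt_range.sublist his).map _ fun _ _ hij => Nat.count_monotone _ hij.le

theorem exists_le_of_four_sublist_blockSeq {a b c d : ℕ} (h : [a, b, c, d] <+ blockSeq f S n) :
    ∃ i j k l, i ≤ j ∧ j ≤ k ∧ k ≤ l ∧ f i = a ∧ f j = b ∧ f k = c ∧ f l = d := by
  obtain ⟨ks, hks, heq⟩ := exists_pairwise_le_of_sublist_blockSeq h
  obtain ⟨i, j, k, l, rfl⟩ := List.length_eq_four.1 (by simpa using congrArg List.length heq.symm)
  exact ⟨i, j, k, l, by grind⟩

theorem map_range_sublist_blockSeq (f : ℕ → ℕ) (S : Finset ℕ) (n : ℕ) :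
    (List.range (Nat.count (· ∈ S) n + 1)).map f <+ blockSeq f S n := by
  induction n with
  | zero => simp [blockSeq]
  | succ n ih =>
    rw [blockSeq_succ]
    by_cases hn : n ∈ S
    · have hcount := Nat.count_succ_eq_succ_count_iff.2 hn
      rw [hcount, List.range_succ, List.map_append]
      exact ih.append (List.Sublist.refl _)
    · rw [Nat.count_succ_eq_count_iff.2 hn]
      exact ih.trans (List.sublist_append_left _ _)

theorem map_sublist_blockSeq (hS : S ⊆ range n) {ks : List ℕ} (hks : ks.Pairwise (· < ·))
    (hle : ∀ k ∈ ks, k ≤ #S) : ks.map f <+ blockSeq f S n := by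
  rw [← count_mem_eq_card hS] at hle
  have hsubset : ks ⊆ List.range (Nat.count (· ∈ S) n + 1) := fun k hk =>
    List.mem_range.2 (Nat.lt_succ_of_le (hle k hk))
  have hsub : ks <+ List.range (Nat.count (· ∈ S) n + 1) :=
    List.sublist_of_subperm_of_sortedLE (List.subperm_of_subset hks.nodup hsubset)
      hks.sortedLT.sortedLE (List.sortedLT_range _).sortedLE
  exact (hsub.map f).trans (map_range_sublist_blockSeq f S n)

theorem asc_blockSeq :
    asc (blockSeq f S n) = Nat.count (fun k => f k < f (k + 1)) (Nat.count (· ∈ S) n) := by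
  have hblocks :
      Nat.count (fun i => f (Nat.count (· ∈ S) i) < f (Nat.count (· ∈ S) (i + 1))) n =
        Nat.count (fun k => f k < f (k + 1)) (Nat.count (· ∈ S) n) := by
    induction n with
    | zero => simp
    | succ n ih =>
      rw [Nat.count_succ, ih]
      by_cases hn : n ∈ S <;> simp [Nat.count_succ, hn]
  rw [asc_eq_count, length_blockSeq, Nat.add_sub_cancel, ← hblocks]
  simp only [Nat.count_eq_card_filter_range _ n]
  refine congrArg card (filter_congr fun i hi => ?_)
  have hi := mem_range.1 hi
  rw [getD_blockSeq hi.le, getD_blockSeq hi]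

theorem isAscSeq_blockSeq (hzero : f 0 = 0)
    (hstep : ∀ k, f (k + 1) ≤ 1 + Nat.count (fun j => f j < f (j + 1)) k) :
    IsAscSeq (blockSeq f S n) := by
  have hstay (k) : f k ≤ 1 + Nat.count (fun j => f j < f (j + 1)) k := by
    cases k with
    | zero => simp [hzero]
    | succ k => exact (hstep k).trans (Nat.add_le_add_left (Nat.count_monotone _ k.le_succ) 1)
  refine ⟨blockSeq_ne_nil, by rw [getD_blockSeq n.zero_le, Nat.count_zero, hzero],
    fun i hi hin => ?_⟩
  obtain ⟨i, rfl⟩ := Nat.exists_eq_add_of_le' hi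
  rw [length_blockSeq] at hin
  rw [getD_blockSeq (by omega), take_blockSeq (by omega), asc_blockSeq]
  by_cases hiS : i ∈ S
  · rw [Nat.count_succ_eq_succ_count_iff.2 hiS]
    exact hstep _
  · rw [Nat.count_succ_eq_count_iff.2 hiS]
    exact hstay _

section Avoidance

variable (hdescent : ∀ ⦃j k⦄, j ≤ k → f k < f j → j = 1 ∧ k = 2)
include hdescent

theorem avoids_0101_blockSeq (hone : ∀ k, 2 ≤ k → f k ≠ f 1) :
    Avoids [0, 1, 0, 1] (blockSeq f S n) := by
  refine avoids_0101_iff.2 fun a b hab hsub => ?_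
  obtain ⟨i, j, k, l, -, hjk, hkl, rfl, rfl, hki, hlj⟩ := exists_le_of_four_sublist_blockSeq hsub
  obtain ⟨rfl, rfl⟩ := hdescent hjk (hki.trans_lt hab)
  exact hone l hkl hlj

theorem avoids_0120_blockSeq : Avoids [0, 1, 2, 0] (blockSeq f S n) := by
  refine avoids_0120_iff.2 fun a b c hab hbc hsub => ?_
  obtain ⟨i, j, k, l, -, hjk, hkl, rfl, rfl, rfl, hli⟩ := exists_le_of_four_sublist_blockSeq hsub
  obtain ⟨rfl, rfl⟩ := hdescent hkl (hli.trans_lt (hab.trans hbc))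
  grind

theorem avoids_0121_blockSeq : Avoids [0, 1, 2, 1] (blockSeq f S n) := by
  refine avoids_0121_iff.2 fun a b c hab hbc hsub => ?_
  obtain ⟨i, j, k, l, hij, hjk, hkl, rfl, rfl, rfl, hlj⟩ := exists_le_of_four_sublist_blockSeq hsub
  obtain ⟨rfl, rfl⟩ := hdescent hkl (hlj.trans_lt hbc)
  grind

end Avoidance

end BlockSequences

section Classification

/-- The block values `0, 1, 0, 2, 3, 4, …` of the counted sequences that have a descent. -/
def dip (k : ℕ) : ℕ :=
  if k < 2 then k else if k = 2 then 0 else k - 1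

variable {S T : Finset ℕ} {n : ℕ}

theorem dip_ne_dip_succ (k : ℕ) : dip k ≠ dip (k + 1) := by
  grind [dip]

theorem dip_descent ⦃j k : ℕ⦄ (hjk : j ≤ k) (h : dip k < dip j) : j = 1 ∧ k = 2 := by
  grind [dip]

theorem count_ascents_dip (k : ℕ) : Nat.count (fun j => dip j < dip (j + 1)) (k + 2) = k + 1 := by
  induction k with
  | zero => rfl
  | succ k ih => rw [Nat.count_succ, ih, if_pos (by grind [dip])]

theorem blockSeq_dip_eq_blockSeq_id (hS : S ⊆ range n) (hcard : #S < 2) :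
    blockSeq dip S n = blockSeq id S n :=
  blockSeq_congr hS fun _ hk => if_pos (hk.trans_lt hcard)

theorem asc_blockSeq_id (hS : S ⊆ range n) : asc (blockSeq id S n) = #S := by
  simp [asc_blockSeq, count_mem_eq_card hS]

theorem asc_blockSeq_dip (hS : S ⊆ range n) (hcard : 2 ≤ #S) :
    asc (blockSeq dip S n) = #S - 1 := by
  obtain ⟨k, hk⟩ := Nat.exists_eq_add_of_le' hcard
  rw [asc_blockSeq, count_mem_eq_card hS, hk, count_ascents_dip]
  rfl

theorem isAvoidingAscSeq_blockSeq_id : IsAvoidingAscSeq (blockSeq id S n) := by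
  have hdescent ⦃j k : ℕ⦄ (hjk : j ≤ k) (h : id k < id j) : j = 1 ∧ k = 2 :=
    absurd hjk (not_le.2 h)
  exact ⟨isAscSeq_blockSeq rfl (by simp [add_comm]),
    avoids_0101_blockSeq hdescent fun k hk => (show 1 < k from hk).ne',
    avoids_0120_blockSeq hdescent, avoids_0121_blockSeq hdescent⟩

theorem isAvoidingAscSeq_blockSeq_dip : IsAvoidingAscSeq (blockSeq dip S n) := by
  refine ⟨isAscSeq_blockSeq rfl fun k => ?_, avoids_0101_blockSeq dip_descent (by grind [dip]),
    avoids_0120_blockSeq dip_descent, avoids_0121_blockSeq dip_descent⟩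
  match k with
  | 0 => decide
  | 1 => decide
  | k + 2 =>
    rw [count_ascents_dip]
    grind [dip]

theorem IsAvoidingAscSeq.eq_of_blockSeq_id_append {v : ℕ}
    (h : IsAvoidingAscSeq (blockSeq id S n ++ [v])) (hS : S ⊆ range n) :
    v = #S ∨ v = #S + 1 ∨ (#S = 1 ∧ v = 0) := by
  have hv := (h.of_append_singleton blockSeq_ne_nil).2
  rw [asc_blockSeq_id hS] at hv
  by_cases hcard : 2 ≤ #S
  · have hle : #S ≤ v := h.le_of_append_singleton hcard fun u hu huS => by
      have hsub := map_sublist_blockSeq (f := id) (ks := [0, u, #S]) hS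
        (by simp [hu, huS, hu.trans huS]) (by simp [huS.le])
      rwa [List.map_id] at hsub
    omega
  · omega

theorem IsAvoidingAscSeq.eq_of_blockSeq_dip_append {v : ℕ}
    (h : IsAvoidingAscSeq (blockSeq dip S n ++ [v])) (hS : S ⊆ range n) (hcard : 2 ≤ #S) :
    v = dip #S ∨ v = dip (#S + 1) := by
  have hv := (h.of_append_singleton blockSeq_ne_nil).2
  rw [asc_blockSeq_dip hS hcard] at hv
  obtain htwo | hthree := hcard.eq_or_lt
  · have h010 : [0, 1, 0] <+ blockSeq dip S n :=
      map_sublist_blockSeq (f := dip) (ks := [0, 1, 2]) hS (by simp) (by simp [← htwo])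
    have hne : v ≠ 1 := by
      rintro rfl
      exact avoids_0101_iff.1 h.2.1 0 1 one_pos (h010.append (List.Sublist.refl [1]))
    grind [dip]
  · have hle : #S - 1 ≤ v := h.le_of_append_singleton (by omega) fun u hu huS => by
      obtain ⟨k, hk, hkS, rfl⟩ : ∃ k, 0 < k ∧ k < #S ∧ dip k = u :=
        ⟨if u = 1 then 1 else u + 1, by grind, by grind, by grind [dip]⟩
      have hlast : dip #S = #S - 1 := by grind [dip]
      have hsub := map_sublist_blockSeq (f := dip) (ks := [0, k, #S]) hS
        (by simp [hk, hkS, hk.trans hkS]) (by simp [hkS.le])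
      rwa [List.map_cons, List.map_cons, List.map_singleton, hlast] at hsub
    grind [dip]

theorem IsAvoidingAscSeq.exists_blockSeq {x : List ℕ} (h : IsAvoidingAscSeq x)
    (hlen : x.length = n + 1) :
    ∃ S ⊆ range n, x = blockSeq id S n ∨ (2 ≤ #S ∧ x = blockSeq dip S n) := by
  induction n generalizing x with
  | zero =>
    obtain ⟨v, rfl⟩ := List.length_eq_one_iff.1 hlen
    obtain rfl : v = 0 := h.1.2.1
    exact ⟨∅, by simp, Or.inl rfl⟩
  | succ n ih =>
    obtain rfl | ⟨y, v, rfl⟩ := List.eq_nil_or_concat' x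
    · simp at hlen
    have hylen : y.length = n + 1 := by simpa using hlen
    have hy := (h.of_append_singleton (List.ne_nil_of_length_pos (by omega))).1
    obtain ⟨S, hS, hyS⟩ := ih hy hylen
    have hsame : S ⊆ range (n + 1) := hS.trans (range_subset_range.2 n.le_succ)
    have hnext : insert n S ⊆ range (n + 1) := insert_subset_range_succ hS
    have hcard_next : #(insert n S) = #S + 1 :=
      card_insert_of_notMem fun hn => notMem_range_self (hS hn)
    obtain rfl | ⟨hcard, rfl⟩ := hyS
    · obtain rfl | rfl | ⟨hone, rfl⟩ := h.eq_of_blockSeq_id_append hS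
      · exact ⟨S, hsame, Or.inl (blockSeq_append_same hS)⟩
      · exact ⟨insert n S, hnext, Or.inl (blockSeq_append_next hS)⟩
      · refine ⟨insert n S, hnext, Or.inr ⟨by omega, ?_⟩⟩
        rw [← blockSeq_append_next hS, blockSeq_dip_eq_blockSeq_id hS (by omega), hone]
        rfl
    · obtain rfl | rfl := h.eq_of_blockSeq_dip_append hS hcard
      · exact ⟨S, hsame, Or.inr ⟨hcard, blockSeq_append_same hS⟩⟩
      · exact ⟨insert n S, hnext, Or.inr ⟨by omega, blockSeq_append_next hS⟩⟩

theorem blockSeq_id_ne_blockSeq_dip (hS : S ⊆ range n) (hcard : 2 ≤ #S) :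
    blockSeq id T n ≠ blockSeq dip S n := by
  intro heq
  have hdescent : [1, 0] <+ blockSeq dip S n :=
    map_sublist_blockSeq (f := dip) (ks := [1, 2]) hS (by simp) (by grind)
  rw [← heq] at hdescent
  obtain ⟨ks, hks, hmap⟩ := exists_pairwise_le_of_sublist_blockSeq hdescent
  rw [List.map_id] at hmap
  simp [← hmap] at hks

end Classification

section Counting

theorem card_filter_two_le_card_powerset {α : Type*} (s : Finset α) :
    #{t ∈ s.powerset | 2 ≤ #t} = 2 ^ #s - (#s + 1) := by
  classical
  have hsmall : {t ∈ s.powerset | ¬ 2 ≤ #t} = powersetCard 0 s ∪ powersetCard 1 s := by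
    ext t
    simp only [mem_filter, mem_powerset, mem_union, mem_powersetCard, ← and_or_left]
    exact and_congr_right fun _ => by omega
  have hsmall_card : #{t ∈ s.powerset | ¬ 2 ≤ #t} = #s + 1 := by
    rw [hsmall, card_union_of_disjoint (pairwise_disjoint_powersetCard s zero_ne_one),
      card_powersetCard, card_powersetCard, Nat.choose_zero_right, Nat.choose_one_right, add_comm]
  have hsum := card_filter_add_card_filter_not (s := s.powerset) (fun t => 2 ≤ #t)
  rw [card_powerset] at hsum
  omega

/-- The counted sequences of length `n + 1`: the weakly increasing block sequences, and those
with a descent, which need at least two cuts. -/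
def avoidingAscSeqs (n : ℕ) : Finset (List ℕ) :=
  (range n).powerset.image (fun S => blockSeq id S n) ∪
    {S ∈ (range n).powerset | 2 ≤ #S}.image (fun S => blockSeq dip S n)

theorem mem_avoidingAscSeqs {n : ℕ} {x : List ℕ} :
    x ∈ avoidingAscSeqs n ↔ x.length = n + 1 ∧ IsAvoidingAscSeq x := by
  simp only [avoidingAscSeqs, mem_union, mem_image, mem_filter, mem_powerset]
  constructor
  · rintro (⟨S, -, rfl⟩ | ⟨S, -, rfl⟩)
    · exact ⟨length_blockSeq, isAvoidingAscSeq_blockSeq_id⟩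
    · exact ⟨length_blockSeq, isAvoidingAscSeq_blockSeq_dip⟩
  · rintro ⟨hlen, hx⟩
    obtain ⟨S, hS, rfl | ⟨hcard, rfl⟩⟩ := hx.exists_blockSeq hlen
    · exact Or.inl ⟨S, hS, rfl⟩
    · exact Or.inr ⟨S, ⟨hS, hcard⟩, rfl⟩

theorem card_avoidingAscSeqs (n : ℕ) : #(avoidingAscSeqs n) = 2 ^ (n + 1) - (n + 1) := by
  have hdisjoint : Disjoint ((range n).powerset.image (fun S => blockSeq id S n))
      ({S ∈ (range n).powerset | 2 ≤ #S}.image (fun S => blockSeq dip S n)) := by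
    simp only [disjoint_left, mem_image, mem_filter, mem_powerset]
    rintro _ ⟨T, -, rfl⟩ ⟨S, ⟨hS, hcard⟩, heq⟩
    exact blockSeq_id_ne_blockSeq_dip hS hcard heq.symm
  have hdip_inj := (injOn_blockSeq dip_ne_dip_succ n).mono
    (coe_subset.2 (filter_subset (fun S => 2 ≤ #S) (range n).powerset))
  have hlt : n < 2 ^ n := Nat.lt_two_pow_self
  rw [avoidingAscSeqs, card_union_of_disjoint hdisjoint,
    card_image_of_injOn (injOn_blockSeq (f := id) (fun k => k.succ_ne_self.symm) n),
    card_image_of_injOn hdip_inj, card_powerset, card_filter_two_le_card_powerset, card_range]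
  omega

end Counting

theorem stmt_14 (n : ℕ) (hn : 1 ≤ n) :
    Nat.card {x : List ℕ // x.length = n ∧ IsAscSeq x ∧ Avoids [0, 1, 0, 1] x ∧ Avoids [0, 1, 2, 0] x ∧ Avoids [0, 1, 2, 1] x} = 2 ^ n - n := by
  obtain ⟨m, rfl⟩ := Nat.exists_eq_add_of_le' hn
  rw [← card_avoidingAscSeqs]
  exact Nat.subtype_card _ fun x => mem_avoidingAscSeqs
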